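/- Let $n, \tilde{n}, d, p, i$ be integers with $0 \le d < \min\{n,\tilde{n}\}$, $1 \le p \le \min\{n,\tilde{n}\}-d$ and $0 \le i \le d$. Let $h$ map a co-signotope $\tau \in \bar{\mathcal{S}}_{p,i}(n,d)$ to the sign function $\tilde{\tau}:\binom{[\tilde{n}]}{d}\to\{+,-\}$ whose $+$-subsets are exactly the sets obtained from the $+$-subsets $B=(b_1<\dots<b_d)$ of $\tau$ by keeping $b_j$ for $j \le i$ and replacing $b_j$ by $b_j + \tilde{n} - n$ for $j > i$ (equivalently, $\tilde{\tau}^{-1}(+)=\{g^{-1}_{\tilde{n},d,i}(g_{n,d,i}(B)) \mid B\in\tau^{-1}(+)\}$). Then $h$ is a bijection between $\bar{\mathcal{S}}_{p,i}(n,d)$ and $\bar{\mathcal{S}}_{p,i}(\tilde{n},d)$; moreover, if additionally $p+1 \le \min\{n,\tilde{n}\}-d$ and $\tau\in\bar{\mathcal{S}}_{p,i}(n,d)$, $\rho\in\bar{\mathcal{S}}_{p+1,i}(n,d)$ differ by a single step, then their images differ by a single step. -/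

import Mathlib

/-! Common definitions: signotopes and co-signotopes on `[n] = {1, …, n}` (encoded as
`Finset.Icc 1 n` in `ℕ`), sign functions are `Finset ℕ → Bool` (`true` = `+`, `false` = `-`)
that vanish (are `-`) away from the relevant subsets. -/

open Classical in
/-- The sign function with `+`-set `S` (and `-` elsewhere). -/
noncomputable def ofPlusSet (S : Set (Finset ℕ)) : Finset ℕ → Bool :=
  fun A => if A ∈ S then true else false

/-- Number of sign changes in a list of signs. -/
def signChanges (l : List Bool) : ℕ :=
  ((l.zip l.tail).filter fun p => p.1 ≠ p.2).length

/-- Number of `+`-subsets of a sign function. -/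
noncomputable def plusCount (τ : Finset ℕ → Bool) : ℕ :=
  {A : Finset ℕ | τ A = true}.ncard

/-- The series of signs `τ (C ∪ {x})` for `x ∈ [n] \ C` in increasing order.
For a `d`-subset `B` with `i`-th smallest element `b`, `series n τ (B.erase b)` is
the `(τ,B,i)`-series. -/
def series (n : ℕ) (τ : Finset ℕ → Bool) (C : Finset ℕ) : List Bool :=
  ((Finset.Icc 1 n \ C).sort (· ≤ ·)).map fun x => τ (insert x C)

/-- An `r`-signotope on `[n]`, encoded as a sign function on all of `Finset ℕ`
which is `-` away from the `r`-subsets of `[n]`. -/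
def IsSignotope (n r : ℕ) (σ : Finset ℕ → Bool) : Prop :=
  (∀ A, σ A = true → A ⊆ Finset.Icc 1 n ∧ A.card = r) ∧
  ∀ X : Finset ℕ, X ⊆ Finset.Icc 1 n → X.card = r + 1 →
    signChanges ((X.sort (· ≤ ·)).map fun x => σ (X.erase x)) ≤ 1

/-- A `d`-co-signotope on `[n]`: every `(τ,B,i)`-series has at most one sign change. -/
def IsCoSignotope (n d : ℕ) (τ : Finset ℕ → Bool) : Prop :=
  (∀ A, τ A = true → A ⊆ Finset.Icc 1 n ∧ A.card = d) ∧
  ∀ B : Finset ℕ, B ⊆ Finset.Icc 1 n → B.card = d → ∀ b ∈ B,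
    signChanges (series n τ (B.erase b)) ≤ 1

/-- `𝒮_p(n,r)`: `r`-signotopes on `[n]` with exactly `p` `+`-signs. -/
noncomputable def sigSet (n r p : ℕ) : Set (Finset ℕ → Bool) :=
  {σ | IsSignotope n r σ ∧ plusCount σ = p}

/-- `𝒮_{≤p}(n,r)`. -/
noncomputable def sigSetLe (n r p : ℕ) : Set (Finset ℕ → Bool) :=
  {σ | IsSignotope n r σ ∧ plusCount σ ≤ p}

/-- `𝒮̄_p(n,d)`: `d`-co-signotopes on `[n]` with exactly `p` `+`-subsets. -/
noncomputable def coSigSet (n d p : ℕ) : Set (Finset ℕ → Bool) :=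
  {τ | IsCoSignotope n d τ ∧ plusCount τ = p}

/-- `𝒮̄_{≤p}(n,d)`. -/
noncomputable def coSigSetLe (n d p : ℕ) : Set (Finset ℕ → Bool) :=
  {τ | IsCoSignotope n d τ ∧ plusCount τ ≤ p}

/-- `σ` and `τ` differ by a single step: `σ⁻¹(+) ⊊ τ⁻¹(+)` and `|τ⁻¹(+)| = |σ⁻¹(+)| + 1`. -/
noncomputable def SingleStep (σ τ : Finset ℕ → Bool) : Prop :=
  {A | σ A = true} ⊂ {A | τ A = true} ∧ plusCount τ = plusCount σ + 1

/-- The higher Bruhat order on `r`-signotopes on `[n]`: reflexive-transitive closure of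
the single step relation. -/
noncomputable def BruhatLe (n r : ℕ) (σ τ : Finset ℕ → Bool) : Prop :=
  Relation.ReflTransGen (fun a b => IsSignotope n r a ∧ IsSignotope n r b ∧ SingleStep a b) σ τ

/-- The complementary higher Bruhat order on `d`-co-signotopes on `[n]`. -/
noncomputable def CoBruhatLe (n d : ℕ) (σ τ : Finset ℕ → Bool) : Prop :=
  Relation.ReflTransGen (fun a b => IsCoSignotope n d a ∧ IsCoSignotope n d b ∧ SingleStep a b) σ τ

/-- Adjacency in the graph `G_{n,d}`: `B' = (B \ {x}) ∪ {y}` with no element of `B \ {x}`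
strictly between `x` and `y`. -/
def GAdj (n d : ℕ) (B B' : Finset ℕ) : Prop :=
  B ⊆ Finset.Icc 1 n ∧ B.card = d ∧ B' ⊆ Finset.Icc 1 n ∧ B'.card = d ∧
  ∃ x ∈ B, ∃ y ∈ Finset.Icc 1 n, y ∉ B ∧ B' = insert y (B.erase x) ∧
    ∀ z ∈ B.erase x, ¬(min x y < z ∧ z < max x y)

/-- The source subset `S_{n,d,i} = {1,…,i} ∪ {n-d+i+1,…,n}`. -/
def sourceSubset (n d i : ℕ) : Finset ℕ :=
  Finset.Icc 1 i ∪ Finset.Icc (n - d + i + 1) n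

/-- Connectivity inside the `+`-subsets of `τ` (the induced subgraph `G_{n,d}[τ]`). -/
def plusConn (n d : ℕ) (τ : Finset ℕ → Bool) : Finset ℕ → Finset ℕ → Prop :=
  Relation.ReflTransGen fun A A' => τ A = true ∧ τ A' = true ∧ GAdj n d A A'

/-- The vertex set `𝒞^τ_i` of the `+`-component of `τ` containing `S_{n,d,i}`
(empty if `S_{n,d,i}` is not a `+`-subset). -/
def comp (n d : ℕ) (τ : Finset ℕ → Bool) (i : ℕ) : Set (Finset ℕ) :=
  {B | τ (sourceSubset n d i) = true ∧ τ B = true ∧ plusConn n d τ (sourceSubset n d i) B}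

/-- The `j`-th smallest element (1-based) of a finite set of naturals. -/
def nthElt (B : Finset ℕ) (j : ℕ) : ℕ := (B.sort (· ≤ ·)).getD (j - 1) 0

/-- `b_j` with the conventions `b_0 = 0` and `b_{d+1} = n+1` (as an integer). -/
def extNth (n d : ℕ) (B : Finset ℕ) (j : ℕ) : ℤ :=
  if j = 0 then 0 else if j ≤ d then (nthElt B j : ℤ) else (n : ℤ) + 1

/-- A series is left-aligned if it starts with `+` and ends with `-`. -/
def LeftAligned (l : List Bool) : Prop :=
  l.head? = some true ∧ l.getLast? = some false

/-- A series is right-aligned if it starts with `-` and ends with `+`. -/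
def RightAligned (l : List Bool) : Prop :=
  l.head? = some false ∧ l.getLast? = some true

/-- `𝒮̄_{p,i}(n,d)`: co-signotopes in `𝒮̄_p(n,d)` whose only nonempty `+`-component
is `𝒞^τ_i` (i.e. every `+`-subset lies in `𝒞^τ_i`). -/
noncomputable def coSigOnly (n d p i : ℕ) : Set (Finset ℕ → Bool) :=
  {τ | IsCoSignotope n d τ ∧ plusCount τ = p ∧ ∀ B, τ B = true → B ∈ comp n d τ i}

/-- `Z(d,i)`: points `(a_1,…,a_d) ∈ ℤ_{>0}^d` (0-indexed in Lean) with `a_j ≥ a_{j-1}`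
for `j ∈ [2,i]` and `a_j ≥ a_{j+1}` for `j ∈ [i+1,d-1]` (1-based indices). -/
def ZSet (d i : ℕ) : Set (Fin d → ℤ) :=
  {a | (∀ j, 0 < a j) ∧
    (∀ j k : Fin d, (j : ℕ) + 1 = (k : ℕ) → (k : ℕ) + 1 ≤ i → a j ≤ a k) ∧
    (∀ j k : Fin d, (j : ℕ) + 1 = (k : ℕ) → i ≤ (j : ℕ) → a k ≤ a j)}

/-- A `(d,i)`-Ferrers diagram with respect to `p`. -/
def IsFerrers (d i p : ℕ) (F : Set (Fin d → ℤ)) : Prop :=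
  F ⊆ ZSet d i ∧ F.ncard = p ∧
  ∀ a ∈ F, ∀ a' ∈ ZSet d i, (∀ j, a' j ≤ a j) → a' ∈ F

/-- The number of `(d,i)`-Ferrers diagrams with respect to `p`. -/
noncomputable def ferrersCount (d i p : ℕ) : ℕ :=
  {F : Set (Fin d → ℤ) | IsFerrers d i p F}.ncard

/-- `f_{n,d,i,j}` (here `j` is the 1-based coordinate index). -/
def fFun (n d i j : ℕ) (x : ℕ) : ℤ :=
  if j ≤ i then (x : ℤ) - j + 1 else ((n : ℤ) - x) - ((d : ℤ) - j) + 1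

/-- `g_{n,d,i}` maps a `d`-subset `B = (b_1 < … < b_d)` to
`(f_{n,d,i,1}(b_1), …, f_{n,d,i,d}(b_d))`. -/
def gMap (n d i : ℕ) (B : Finset ℕ) : Fin d → ℤ :=
  fun k => fFun n d i ((k : ℕ) + 1) (nthElt B ((k : ℕ) + 1))

/-- A sparse composition of `p` of length `d+1`. -/
def IsSparseComposition (d p : ℕ) (c : Fin (d + 1) → ℕ) : Prop :=
  (∑ i, c i) = p ∧
  ∀ i : Fin (d + 1), 1 ≤ (i : ℕ) →
    c i = 0 ∨ c ⟨(i : ℕ) - 1, lt_of_le_of_lt (Nat.sub_le _ _) i.isLt⟩ = 0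

/-- The component `τ_i` of the `+`-component decomposition `Δ(τ)`:
the sign function whose `+`-set is `𝒞^τ_i`. -/
noncomputable def compFun (n d : ℕ) (τ : Finset ℕ → Bool) (i : ℕ) : Finset ℕ → Bool :=
  ofPlusSet (comp n d τ i)

/-- Keep the `i` smallest elements of `B` and shift the others by `ñ - n`
(this is `g⁻¹_{ñ,d,i} ∘ g_{n,d,i}` on `d`-subsets). -/
def gammaSet (n tn i : ℕ) (B : Finset ℕ) : Finset ℕ :=
  ((B.sort (· ≤ ·)).mapIdx fun k x => if k < i then x else x + tn - n).toFinset

/-- The map `h_{n,ñ,d,p,i}` on sign functions. -/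
noncomputable def hFun (n tn i : ℕ) (τ : Finset ℕ → Bool) : Finset ℕ → Bool :=
  ofPlusSet {A | ∃ B, τ B = true ∧ A = gammaSet n tn i B}

open Classical in
/-- `γ_{τ,ñ}(B)`: replace `b_j` by `b_j + ñ - n` whenever the `(τ,B,j)`-series is
right-aligned. -/
noncomputable def gammaFun (n tn : ℕ) (τ : Finset ℕ → Bool) (B : Finset ℕ) : Finset ℕ :=
  B.image fun x => if RightAligned (series n τ (B.erase x)) then x + tn - n else x

/-- The simple bijection `φ_{n,ñ,d,p}` on sign functions. -/
noncomputable def phiFun (n tn : ℕ) (τ : Finset ℕ → Bool) : Finset ℕ → Bool :=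
  ofPlusSet {A | ∃ B, τ B = true ∧ A = gammaFun n tn τ B}
/-- `0`-based rank of `x` in `B`. -/
def rk (B : Finset ℕ) (x : ℕ) : ℕ := (B.filter (· < x)).card

/-- The Ferrers-type closure condition. -/
def Good (n d p i : ℕ) (P : Set (Finset ℕ)) : Prop :=
  (∀ A ∈ P, A ⊆ Finset.Icc 1 n ∧ A.card = d) ∧ P.ncard = p ∧
  (∀ B ∈ P, ∀ x ∈ B, rk B x < i → ∀ y, 1 ≤ y → y < x → y ∉ B → insert y (B.erase x) ∈ P) ∧
  (∀ B ∈ P, ∀ x ∈ B, i ≤ rk B x → ∀ y, y ≤ n → x < y → y ∉ B → insert y (B.erase x) ∈ P)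

lemma signChanges_cons (a b : Bool) (l : List Bool) :
    signChanges (a :: b :: l) = (if a = b then 0 else 1) + signChanges (b :: l) := by
  unfold signChanges
  by_cases h : a = b <;> simp [h]
  omega

lemma signChanges_zero (a : Bool) (l : List Bool) :
    signChanges (a :: l) = 0 ↔ ∀ x ∈ l, x = a := by
  induction l generalizing a with
  | nil => simp [signChanges]
  | cons b l ih =>
    rw [signChanges_cons]
    by_cases h : a = b
    · subst h; simp [ih]
    · simp [h]; intro h'; exact absurd h'.symm h

lemma signChanges_le_one (l : List Bool) :
    signChanges l ≤ 1 ↔ l.Pairwise (fun a b => b = true → a = true) ∨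
      l.Pairwise (fun a b => a = true → b = true) := by
  induction l with
  | nil => simp [signChanges]
  | cons a l ih =>
    cases l with
    | nil => simp [signChanges]
    | cons b l =>
      rw [signChanges_cons]
      by_cases h : a = b
      · subst h
        rw [if_pos rfl, zero_add, ih, List.pairwise_cons (a := a) (l := a :: l),
          List.pairwise_cons (a := a) (l := a :: l)]
        constructor
        · rintro (h | h)
          · left; refine ⟨?_, h⟩
            rw [List.pairwise_cons] at h
            intro x hx
            rcases List.mem_cons.1 hx with rfl | hx
            · exact id
            · exact h.1 x hx
          · right; refine ⟨?_, h⟩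
            rw [List.pairwise_cons] at h
            intro x hx
            rcases List.mem_cons.1 hx with rfl | hx
            · exact id
            · exact h.1 x hx
        · rintro (h | h)
          · exact Or.inl h.2
          · exact Or.inr h.2
      · rw [if_neg h]
        have : 1 + signChanges (b :: l) ≤ 1 ↔ signChanges (b :: l) = 0 := by omega
        rw [this, signChanges_zero]
        constructor
        · intro hl
          have key : ∀ x ∈ b :: l, x = b := by
            intro x hx
            rcases List.mem_cons.1 hx with rfl | hx
            · rfl
            · exact hl x hx
          have h2 : ∀ (R : Bool → Bool → Prop), R b b → (b :: l).Pairwise R := by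
            intro R hR
            rw [List.pairwise_iff_forall_sublist]
            intro x y hxy
            have hx : x ∈ b :: l := hxy.subset (by simp)
            have hy : y ∈ b :: l := hxy.subset (by simp)
            rw [key x hx, key y hy]; exact hR
          cases a
          · right
            rw [List.pairwise_cons]
            exact ⟨by simp, h2 _ id⟩
          · left
            rw [List.pairwise_cons]
            exact ⟨by simp, h2 _ id⟩
        · rintro (h1 | h1)
          · rw [List.pairwise_cons, List.pairwise_cons] at h1
            intro x hx
            have e1 := h1.1 b (by simp)
            have e2 := h1.2.1 x hx
            have e3 := h1.1 x (by simp [hx])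
            revert h e1 e2 e3
            cases a <;> cases b <;> cases x <;> simp
          · rw [List.pairwise_cons, List.pairwise_cons] at h1
            intro x hx
            have e1 := h1.1 b (by simp)
            have e2 := h1.2.1 x hx
            have e3 := h1.1 x (by simp [hx])
            revert h e1 e2 e3
            cases a <;> cases b <;> cases x <;> simp

def Down (n : ℕ) (τ : Finset ℕ → Bool) (C : Finset ℕ) : Prop :=
  ∀ x y, 1 ≤ x → x < y → y ≤ n → x ∉ C → y ∉ C → τ (insert y C) = true → τ (insert x C) = true
def Up (n : ℕ) (τ : Finset ℕ → Bool) (C : Finset ℕ) : Prop :=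
  ∀ x y, 1 ≤ x → x < y → y ≤ n → x ∉ C → y ∉ C → τ (insert x C) = true → τ (insert y C) = true

lemma sort_pairwise_iff (X : Finset ℕ) (R : ℕ → ℕ → Prop) :
    (X.sort (· ≤ ·)).Pairwise R ↔ ∀ x ∈ X, ∀ y ∈ X, x < y → R x y := by
  have hs : (X.sort (· ≤ ·)).Pairwise (· < ·) := (Finset.sortedLT_sort X).pairwise
  constructor
  · intro h x hx y hy hxy
    exact List.Pairwise.forall_of_forall_of_flip (R := fun a b => a < b → R a b)
      (fun x _ h => absurd h (lt_irrefl _)) (h.imp fun {a b} h (_ : a < b) => h)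
      (hs.imp fun {a b} h1 (h2 : b < a) => absurd h1 (by omega))
      ((Finset.mem_sort _).2 hx) ((Finset.mem_sort _).2 hy) hxy
  · intro h
    refine List.Pairwise.imp_of_mem ?_ hs
    intro a b ha hb hab
    exact h a ((Finset.mem_sort _).1 ha) b ((Finset.mem_sort _).1 hb) hab

lemma series_iff (n : ℕ) (τ : Finset ℕ → Bool) (C : Finset ℕ) :
    signChanges (series n τ C) ≤ 1 ↔ Down n τ C ∨ Up n τ C := by
  unfold series
  rw [signChanges_le_one, List.pairwise_map, List.pairwise_map, sort_pairwise_iff,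
    sort_pairwise_iff]
  unfold Down Up
  simp only [Finset.mem_sdiff, Finset.mem_Icc]
  refine or_congr ?_ ?_
  · constructor
    · intro h x y h1 h2 h3 h4 h5
      exact h x ⟨⟨h1, by omega⟩, h4⟩ y ⟨⟨by omega, h3⟩, h5⟩ h2
    · intro h x hx y hy hxy
      exact h x y hx.1.1 hxy hy.1.2 hx.2 hy.2
  · constructor
    · intro h x y h1 h2 h3 h4 h5
      exact h x ⟨⟨h1, by omega⟩, h4⟩ y ⟨⟨by omega, h3⟩, h5⟩ h2
    · intro h x hx y hy hxy
      exact h x y hx.1.1 hxy hy.1.2 hx.2 hy.2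

lemma insert_inj_on (C S : Finset ℕ) : Set.InjOn (fun z => insert z C) (S \ C : Finset ℕ) := by
  intro a ha b hb hab
  simp only [Finset.coe_sdiff, Set.mem_sdiff, Finset.mem_coe] at ha hb
  have : a ∈ insert b C := by rw [← show insert a C = insert b C from hab]; simp
  simpa [ha.2] using this

/-- one family count -/
lemma count_one (P : Set (Finset ℕ)) (hP : P.Finite) (C S : Finset ℕ)
    (h : ∀ z ∈ S, z ∉ C → insert z C ∈ P) : S.card ≤ P.ncard + C.card := by
  classical
  have h1 : ((S \ C).image (fun z => insert z C)).card = (S \ C).card :=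
    Finset.card_image_of_injOn (insert_inj_on C S)
  have h2 : (((S \ C).image (fun z => insert z C) : Finset (Finset ℕ)) : Set (Finset ℕ)) ⊆ P := by
    intro A hA
    simp only [Finset.coe_image, Set.mem_image, Finset.mem_coe, Finset.mem_sdiff] at hA
    obtain ⟨z, hz, rfl⟩ := hA
    exact h z hz.1 hz.2
  have h3 := Set.ncard_le_ncard h2 hP
  rw [Set.ncard_coe_finset, h1] at h3
  have h4 := Finset.le_card_sdiff C S
  omega

/-- two families count -/
lemma count_two (P : Set (Finset ℕ)) (hP : P.Finite) (C S T : Finset ℕ) (x y : ℕ)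
    (hxy : x ≠ y) (hx : x ∉ C) (hy : y ∉ C)
    (h : ∀ z ∈ S, z ∉ insert x C → insert z (insert x C) ∈ P)
    (h' : ∀ z ∈ T, z ∉ insert y C → insert z (insert y C) ∈ P) :
    (S \ insert x C).card + (T \ insert y C).card ≤ P.ncard + 1 := by
  classical
  set U := (S \ insert x C).image (fun z => insert z (insert x C)) with hU
  set V := (T \ insert y C).image (fun z => insert z (insert y C)) with hV
  have h1 : U.card = (S \ insert x C).card :=
    Finset.card_image_of_injOn (insert_inj_on _ S)
  have h2 : V.card = (T \ insert y C).card :=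
    Finset.card_image_of_injOn (insert_inj_on _ T)
  have h3 : U ∩ V ⊆ {insert y (insert x C)} := by
    intro A hA
    simp only [hU, hV, Finset.mem_inter, Finset.mem_image, Finset.mem_sdiff] at hA
    obtain ⟨⟨z, ⟨hz, hz'⟩, rfl⟩, w, ⟨hw, hw'⟩, hzw⟩ := hA
    have : y ∈ insert z (insert x C) := by rw [← hzw]; simp
    simp only [Finset.mem_insert] at this
    rcases this with rfl | rfl | h
    · simp
    · exact absurd rfl hxy
    · exact absurd h hy
  have h4 : ((U ∪ V : Finset (Finset ℕ)) : Set (Finset ℕ)) ⊆ P := by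
    intro A hA
    simp only [hU, hV, Finset.mem_coe, Finset.mem_union, Finset.mem_image, Finset.mem_sdiff] at hA
    rcases hA with ⟨z, hz, rfl⟩ | ⟨z, hz, rfl⟩
    · exact h z hz.1 hz.2
    · exact h' z hz.1 hz.2
  have h5 := Set.ncard_le_ncard h4 hP
  rw [Set.ncard_coe_finset] at h5
  have h6 := Finset.card_union_add_card_inter U V
  have h7 := Finset.card_le_card h3
  rw [Finset.card_singleton] at h7
  omega

/-- interval version of the two families count -/
lemma count_ivl (P : Set (Finset ℕ)) (hP : P.Finite) (n : ℕ) (C : Finset ℕ) (x y k l : ℕ)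
    (hxy : x ≠ y) (hx : x ∉ C) (hy : y ∉ C) (hkl : k ≤ l) (hkC : k ∉ C) (hln : l ≤ n)
    (hor : k < x ∨ y < l)
    (h : ∀ z, 1 ≤ z → z ≤ k → z ∉ insert x C → insert z (insert x C) ∈ P)
    (h' : ∀ z, l ≤ z → z ≤ n → z ∉ insert y C → insert z (insert y C) ∈ P) :
    n + k ≤ P.ncard + 1 + C.card + l ∧
      (k < x → y < l → n + k + 1 ≤ P.ncard + 1 + C.card + l) := by
  classical
  have h0 := count_two P hP C (Finset.Icc 1 k) (Finset.Icc l n) x y hxy hx hy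
    (fun z hz => h z (Finset.mem_Icc.1 hz).1 (Finset.mem_Icc.1 hz).2)
    (fun z hz => h' z (Finset.mem_Icc.1 hz).1 (Finset.mem_Icc.1 hz).2)
  have a1 : (Finset.Icc 1 k \ insert x C).card + (if k < x then 0 else 1)
      + (C.filter (· ≤ k)).card ≥ k := by
    have e : Finset.Icc 1 k ⊆ (Finset.Icc 1 k \ insert x C) ∪ 
        ((if k < x then ∅ else {x}) ∪ C.filter (· ≤ k)) := by
      intro z hz
      simp only [Finset.mem_union, Finset.mem_sdiff, Finset.mem_insert, Finset.mem_filter]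
      have := Finset.mem_Icc.1 hz
      by_cases hzx : z = x
      · right; left; rw [if_neg (by omega)]; simp [hzx]
      · by_cases hzC : z ∈ C
        · right; right; exact ⟨hzC, this.2⟩
        · left; exact ⟨hz, by tauto⟩
    have e1 := Finset.card_le_card e
    have e2 := Finset.card_union_le (Finset.Icc 1 k \ insert x C)
        ((if k < x then ∅ else {x}) ∪ C.filter (· ≤ k))
    have e3 := Finset.card_union_le (if k < x then ∅ else {x}) (C.filter (· ≤ k))
    have e4 : (if k < x then (∅ : Finset ℕ) else {x}).card = if k < x then 0 else 1 := by
      split_ifs <;> simp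
    rw [Nat.card_Icc] at e1
    omega
  have a2 : (Finset.Icc l n \ insert y C).card + (if y < l then 0 else 1)
      + (C.filter (fun z => ¬ (z ≤ k))).card + l ≥ n + 1 := by
    have e : Finset.Icc l n ⊆ (Finset.Icc l n \ insert y C) ∪ 
        ((if y < l then ∅ else {y}) ∪ C.filter (fun z => ¬ (z ≤ k))) := by
      intro z hz
      simp only [Finset.mem_union, Finset.mem_sdiff, Finset.mem_insert, Finset.mem_filter]
      have := Finset.mem_Icc.1 hz
      by_cases hzx : z = y
      · right; left; rw [if_neg (by omega)]; simp [hzx]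
      · by_cases hzC : z ∈ C
        · right; right; refine ⟨hzC, ?_⟩
          have : z ≠ k := by rintro rfl; exact hkC hzC
          omega
        · left; exact ⟨hz, by tauto⟩
    have e1 := Finset.card_le_card e
    have e2 := Finset.card_union_le (Finset.Icc l n \ insert y C)
        ((if y < l then ∅ else {y}) ∪ C.filter (fun z => ¬ (z ≤ k)))
    have e3 := Finset.card_union_le (if y < l then ∅ else {y}) (C.filter (fun z => ¬ (z ≤ k)))
    have e4 : (if y < l then (∅ : Finset ℕ) else {y}).card = if y < l then 0 else 1 := by
      split_ifs <;> simp
    rw [Nat.card_Icc] at e1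
    omega
  have a3 := Finset.card_filter_add_card_filter_not (s := C) (fun z => z ≤ k)
  constructor
  · split_ifs at a1 a2 <;> omega
  · intro q1 q2
    rw [if_pos q1] at a1; rw [if_pos q2] at a2; omega

lemma rk_insert (C : Finset ℕ) (x k : ℕ) (hx : x ∉ C) :
    rk (insert x C) k = rk C k + if x < k then 1 else 0 := by
  unfold rk
  rw [Finset.filter_insert]
  split_ifs
  · rw [Finset.card_insert_of_notMem (by simp [hx])]
  · rfl

lemma rk_erase_self (B : Finset ℕ) (x : ℕ) : rk (B.erase x) x = rk B x := by
  unfold rk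
  congr 1; ext z; simp only [Finset.mem_filter, Finset.mem_erase]
  constructor
  · rintro ⟨⟨_, h⟩, h'⟩; exact ⟨h, h'⟩
  · rintro ⟨h, h'⟩; exact ⟨⟨by omega, h⟩, h'⟩

lemma rk_mono (B : Finset ℕ) {x y : ℕ} (h : x ≤ y) : rk B x ≤ rk B y := by
  unfold rk
  apply Finset.card_le_card
  intro z; simp only [Finset.mem_filter]; rintro ⟨a, b⟩; exact ⟨a, by omega⟩

lemma rk_lt (B : Finset ℕ) {x y : ℕ} (hx : x ∈ B) (h : x < y) : rk B x < rk B y := by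
  unfold rk
  apply Finset.card_lt_card
  rw [Finset.ssubset_iff_of_subset]
  · exact ⟨x, by simp [hx, h], by simp⟩
  · intro z; simp only [Finset.mem_filter]; rintro ⟨a, b⟩; exact ⟨a, by omega⟩

lemma exists_rk (C : Finset ℕ) (j : ℕ) (hj : j < C.card) : ∃ c ∈ C, rk C c = j := by
  have : (C.image (rk C)) = Finset.range C.card := by
    apply Finset.eq_of_subset_of_card_le
    · intro z hz
      obtain ⟨c, hc, rfl⟩ := Finset.mem_image.1 hz
      rw [Finset.mem_range]
      unfold rk
      apply Finset.card_lt_card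
      rw [Finset.ssubset_iff_of_subset (Finset.filter_subset _ _)]
      exact ⟨c, hc, by simp⟩
    · rw [Finset.card_image_of_injOn, Finset.card_range]
      intro a ha b hb hab
      rcases lt_trichotomy a b with h | h | h
      · have := rk_lt C ha h; omega
      · exact h
      · have := rk_lt C hb h; omega
  have hj' : j ∈ C.image (rk C) := by rw [this]; simpa using hj
  obtain ⟨c, hc, h⟩ := Finset.mem_image.1 hj'
  exact ⟨c, hc, h⟩

lemma two_align (n : ℕ) (τ : Finset ℕ → Bool) (hfin : {A | τ A = true}.Finite) (C : Finset ℕ)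
    (x y k : ℕ) (hxy : x ≠ y) (hx : x ∉ C) (hy : y ∉ C) (hk : k ∉ C) (hkx : k ≠ x) (hky : k ≠ y)
    (hk1 : 1 ≤ k) (hkn : k ≤ n)
    (hor : k < x ∨ y < k)
    (h1 : τ (insert k (insert x C)) = true) (h2 : τ (insert k (insert y C)) = true)
    (hD : Down n τ (insert x C)) (hU : Up n τ (insert y C)) :
    n ≤ plusCount τ + 1 + C.card := by
  have := (count_ivl {A | τ A = true} hfin n C x y k k hxy hx hy le_rfl hk hkn hor ?_ ?_).1
  · unfold plusCount; omega
  · intro z hz1 hzk hz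
    rcases hzk.eq_or_lt with rfl | hlt
    · exact h1
    · exact hD z k hz1 hlt hkn hz (by simp [hkx, hk]) h1
  · intro z hzk hzn hz
    rcases hzk.eq_or_lt with rfl | hlt
    · exact h2
    · exact hU k z hk1 hlt hzn (by simp [hky, hk]) hz h2

def AlignInv (n i : ℕ) (τ : Finset ℕ → Bool) (B : Finset ℕ) : Prop :=
  ∀ k ∈ B, (rk B k < i → Down n τ (B.erase k)) ∧ (i ≤ rk B k → Up n τ (B.erase k))

lemma cosig_du {n d : ℕ} {τ : Finset ℕ → Bool} (h : IsCoSignotope n d τ) {B : Finset ℕ}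
    (hB : τ B = true) {k : ℕ} (hk : k ∈ B) : Down n τ (B.erase k) ∨ Up n τ (B.erase k) :=
  (series_iff _ _ _).1 (h.2 B (h.1 B hB).1 (h.1 B hB).2 k hk)

lemma inv_step {n d p i : ℕ} {τ : Finset ℕ → Bool} (hpn : p + d ≤ n)
    (h : IsCoSignotope n d τ) (hfin : {A | τ A = true}.Finite) (hp : plusCount τ = p)
    {B B' : Finset ℕ} (hB : τ B = true) (hB' : τ B' = true) (hadj : GAdj n d B B')
    (hI : AlignInv n i τ B) : AlignInv n i τ B' := by
  obtain ⟨hBs, hBc, hBs', hBc', x, hx, y, hy, hyB, hBB', hbet⟩ := hadj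
  set E := B.erase x with hE
  have hxE : x ∉ E := by simp [hE]
  have hyE : y ∉ E := by simp [hE, hyB]
  have hBE : B = insert x E := by simp [hE, Finset.insert_erase hx]
  have hxy : x ≠ y := by rintro rfl; exact hyB hx
  have hBc2 : E.card + 1 = d := by rw [← hBc, hBE, Finset.card_insert_of_notMem hxE]
  intro k hk
  by_cases hky : k = y
  · subst hky
    have e1 : B'.erase k = E := by rw [hBB', Finset.erase_insert hyE]
    have e2 : rk B' k = rk B x := by
      rw [← rk_erase_self, e1, ← rk_erase_self B x, ← hE]
      unfold rk
      congr 1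
      ext z
      simp only [Finset.mem_filter]
      refine and_congr_right fun hz => ?_
      have h1 := hbet z hz
      have h2 : z ≠ x := by rintro rfl; exact hxE hz
      have h3 : z ≠ k := by rintro rfl; exact hyE hz
      omega
    rw [e1, e2]
    exact hI x hx
  · have hkE : k ∈ E := by rw [hBB'] at hk; exact (Finset.mem_insert.1 hk).resolve_left hky
    have hkx : k ≠ x := by rintro rfl; exact hxE hkE
    have hkB : k ∈ B := by rw [hBE]; simp [hkE]
    have h1 := hbet k hkE
    have e2 : rk B' k = rk B k := by
      rw [hBB', hBE, rk_insert _ _ _ hxE, rk_insert _ _ _ hyE]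
      congr 1
      split_ifs <;> omega
    set C := E.erase k with hC
    have hkC : k ∉ C := by simp [hC]
    have hxC : x ∉ C := by simp [hC, hxE]
    have hyC : y ∉ C := by simp [hC, hyE]
    have hEC : E = insert k C := by simp [hC, Finset.insert_erase hkE]
    have f1 : B.erase k = insert x C := by
      rw [hBE, hEC, Finset.insert_comm, Finset.erase_insert (by simp [hkx, hkC])]
    have f2 : B'.erase k = insert y C := by
      rw [hBB', hEC, Finset.insert_comm, Finset.erase_insert (by simp [hky, hkC])]
    have g1 : τ (insert k (insert x C)) = true := by
      rw [← f1, Finset.insert_erase hkB]; exact hB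
    have g2 : τ (insert k (insert y C)) = true := by
      rw [← f2, Finset.insert_erase hk]; exact hB'
    have hCc : C.card + 2 = d := by
      rw [hEC, Finset.card_insert_of_notMem hkC] at hBc2; omega
    have hkI := Finset.mem_Icc.1 (hBs hkB)
    have hk' := hI k hkB
    have hdu := cosig_du h hB' hk
    rw [e2, f2]
    rw [f1] at hk'
    rw [f2] at hdu
    constructor
    · intro hr
      rcases hdu with hd | hd
      · exact hd
      · have := two_align n τ hfin C x y k hxy hxC hyC hkC hkx hky hkI.1 hkI.2 (by omega) g1 g2
          (hk'.1 hr) hd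
        omega
    · intro hr
      rcases hdu with hd | hd
      · have := two_align n τ hfin C y x k hxy.symm hyC hxC hkC hky hkx hkI.1 hkI.2 (by omega) g2 g1
          hd (hk'.2 hr)
        omega
      · exact hd

lemma inv_source {n d i : ℕ} {τ : Finset ℕ → Bool} (hdn : d ≤ n) (hi : i ≤ d)
    (h : IsCoSignotope n d τ) (hS : τ (sourceSubset n d i) = true) :
    AlignInv n i τ (sourceSubset n d i) := by
  intro k hk
  have hk' := hk
  simp only [sourceSubset, Finset.mem_union, Finset.mem_Icc] at hk'
  have hdu := cosig_du h hS hk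
  constructor
  · intro hr
    have hki : k ≤ i := by
      by_contra hcon
      have : Finset.Icc 1 i ⊆ (sourceSubset n d i).filter (· < k) := by
        intro z hz
        simp only [sourceSubset, Finset.mem_filter, Finset.mem_union]
        have := Finset.mem_Icc.1 hz
        exact ⟨Or.inl hz, by omega⟩
      have := Finset.card_le_card this
      rw [Nat.card_Icc] at this
      unfold rk at hr
      omega
    rcases hdu with hd | hd
    · exact hd
    · intro x y hx hxy hyn hxC hyC _
      have hxk : k ≤ x := by
        by_contra hcon
        apply hxC
        simp only [sourceSubset, Finset.mem_erase, Finset.mem_union, Finset.mem_Icc]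
        omega
      rcases hxk.eq_or_lt with rfl | hlt
      · rw [Finset.insert_erase hk]; exact hS
      · exact hd k x (by omega) hlt (by omega) (by simp) hxC (by rw [Finset.insert_erase hk]; exact hS)
  · intro hr
    have hki : n - d + i + 1 ≤ k := by
      by_contra hcon
      have : (sourceSubset n d i).filter (· < k) ⊆ Finset.Icc 1 (k - 1) := by
        intro z hz
        simp only [sourceSubset, Finset.mem_filter, Finset.mem_union, Finset.mem_Icc] at hz ⊢
        omega
      have := Finset.card_le_card this
      rw [Nat.card_Icc] at this
      unfold rk at hr
      omega
    rcases hdu with hd | hd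
    · intro x y hx hxy hyn hxC hyC _
      have hxk : y ≤ k := by
        by_contra hcon
        apply hyC
        simp only [sourceSubset, Finset.mem_erase, Finset.mem_union, Finset.mem_Icc]
        omega
      rcases hxk.eq_or_lt with rfl | hlt
      · rw [Finset.insert_erase hk]; exact hS
      · exact hd y k (by omega) hlt (by omega) hyC (by simp) (by rw [Finset.insert_erase hk]; exact hS)
    · exact hd

lemma good_of_coSig {n d p i : ℕ} {τ : Finset ℕ → Bool} (hp1 : 1 ≤ p) (hpn : p + d ≤ n)
    (hi : i ≤ d) (h : τ ∈ coSigOnly n d p i) : Good n d p i {A | τ A = true} := by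
  obtain ⟨hc, hp, hcomp⟩ := h
  have hfin : {A | τ A = true}.Finite := by
    apply Set.finite_of_ncard_ne_zero
    unfold plusCount at hp; omega
  have hinv : ∀ B, τ B = true → AlignInv n i τ B := by
    intro B hB
    obtain ⟨h1, h2, h3⟩ := hcomp B hB
    unfold plusConn at h3
    clear h2 hB
    induction h3 with
    | refl => exact inv_source (by omega) hi hc h1
    | tail _ hst ih => exact inv_step hpn hc hfin hp hst.1 hst.2.1 hst.2.2 ih
  refine ⟨hc.1, hp, ?_, ?_⟩
  · intro B hB x hx hr y hy hyx hyB
    exact (hinv B hB x hx).1 hr y x hy hyx (Finset.mem_Icc.1 ((hc.1 B hB).1 hx)).2 (by simp [hyB])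
      (by simp) (by rw [Finset.insert_erase hx]; exact hB)
  · intro B hB x hx hr y hy hyx hyB
    exact (hinv B hB x hx).2 hr x y (Finset.mem_Icc.1 ((hc.1 B hB).1 hx)).1 hyx hy (by simp)
      (by simp [hyB]) (by rw [Finset.insert_erase hx]; exact hB)

lemma cosig_of_good {n d p i : ℕ} {τ : Finset ℕ → Bool} (hp1 : 1 ≤ p) (hpn : p + d ≤ n)
    (hg : Good n d p i {A | τ A = true}) : IsCoSignotope n d τ := by
  obtain ⟨hs, hp, hD, hU⟩ := hg
  have hfin : {A | τ A = true}.Finite := Set.finite_of_ncard_ne_zero (by omega)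
  refine ⟨hs, ?_⟩
  intro B hB hBc b hb
  rw [series_iff]
  set C := B.erase b with hC
  have hCc : C.card + 1 = d := by rw [← hBc, hC, Finset.card_erase_add_one hb]
  by_contra hcon
  rw [not_or] at hcon
  unfold Down Up at hcon
  push Not at hcon
  obtain ⟨⟨x, y, hx1, hxy, hyn, hxC, hyC, hy, hx⟩, x', y', hx1', hxy', hyn', hxC', hyC', hx', hy'⟩ := hcon
  have r1 : i ≤ rk C y := by
    by_contra hlt
    have := hD _ hy y (by simp) (by rw [rk_insert _ _ _ hyC]; simp; omega) x hx1 hxy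
      (by simp [hxC]; omega)
    rw [Finset.erase_insert hyC] at this
    exact hx this
  have r2 : rk C x' < i := by
    by_contra hlt
    have := hU _ hx' x' (by simp) (by rw [rk_insert _ _ _ hxC']; simp; omega) y' hyn' hxy'
      (by simp [hyC']; omega)
    rw [Finset.erase_insert hxC'] at this
    exact hy' this
  have r3 : rk C y ≤ C.card := Finset.card_filter_le _ _
  obtain ⟨c, hc, hrc⟩ := exists_rk C (i - 1) (by omega)
  have hcx : x' < c := by
    by_contra hcon
    have : c ≠ x' := by rintro rfl; exact hxC' hc
    have := rk_lt C hc (show c < x' by omega)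
    omega
  have hcy : c < y := by
    by_contra hcon
    have := rk_mono C (show y ≤ c by omega)
    omega
  have hcB : c ∈ Finset.Icc 1 n := hB (Finset.mem_of_mem_erase hc)
  rw [Finset.mem_Icc] at hcB
  have key : ∀ w, w ∉ C → (insert w C).erase c = insert w (C.erase c) := by
    intro w hw
    rw [Finset.erase_insert_of_ne (by rintro rfl; exact hw hc)]
  have key2 : ∀ w, insert c (insert w (C.erase c)) = insert w C := by
    intro w
    rw [Finset.insert_comm, Finset.insert_erase hc]
  have := (count_ivl {A | τ A = true} hfin n (C.erase c) y x' c c (by omega) (by simp [hyC])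
    (by simp [hxC']) le_rfl (by simp) hcB.2 (by omega) ?_ ?_).1
  · have := Finset.card_erase_add_one hc
    omega
  · intro z hz1 hzk hz
    rcases hzk.eq_or_lt with rfl | hlt
    · rw [key2]; exact hy
    · have := hD _ hy c (by simp [hc]) (by rw [rk_insert _ _ _ hyC, if_neg (by omega)]; omega) z hz1
        hlt (by
          intro h; apply hz
          simp only [Finset.mem_insert, Finset.mem_erase] at h ⊢
          rcases h with h | h
          · exact Or.inl h
          · exact Or.inr ⟨by omega, h⟩)
      rwa [key y hyC] at this
  · intro z hzk hzn hz
    rcases hzk.eq_or_lt with rfl | hlt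
    · rw [key2]; exact hx'
    · have := hU _ hx' c (by simp [hc]) (by rw [rk_insert _ _ _ hxC', if_pos (by omega)]; omega) z hzn
        hlt (by
          intro h; apply hz
          simp only [Finset.mem_insert, Finset.mem_erase] at h ⊢
          rcases h with h | h
          · exact Or.inl h
          · exact Or.inr ⟨by omega, h⟩)
      rwa [key x' hxC'] at this

lemma gadj_move {n d : ℕ} {B : Finset ℕ} (hB : B ⊆ Finset.Icc 1 n) (hBc : B.card = d) {x y : ℕ}
    (hx : x ∈ B) (hy : y ∉ B) (hyI : y ∈ Finset.Icc 1 n)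
    (hbet : ∀ z ∈ B, z ≠ x → ¬(min x y < z ∧ z < max x y)) :
    GAdj n d (insert y (B.erase x)) B := by
  have hyE : y ∉ B.erase x := by simp [hy]
  have hxy : x ≠ y := by rintro rfl; exact hy hx
  refine ⟨?_, ?_, hB, hBc, y, by simp, x, hB hx, ?_, ?_, ?_⟩
  · intro z hz
    rcases Finset.mem_insert.1 hz with rfl | hz
    · exact hyI
    · exact hB (Finset.mem_of_mem_erase hz)
  · rw [Finset.card_insert_of_notMem hyE, Finset.card_erase_add_one hx, hBc]
  · simp [hxy]
  · rw [Finset.erase_insert hyE, Finset.insert_erase hx]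
  · intro z hz
    rw [Finset.erase_insert hyE] at hz
    rw [min_comm, max_comm]
    exact hbet z (Finset.mem_of_mem_erase hz) (Finset.ne_of_mem_erase hz)

lemma sum_move (B : Finset ℕ) (x y : ℕ) (hx : x ∈ B) (hy : y ∉ B) :
    (∑ z ∈ insert y (B.erase x), z) + x = (∑ z ∈ B, z) + y := by
  rw [Finset.sum_insert (by simp [hy])]
  have := Finset.sum_erase_add B (fun z => z) hx
  omega

lemma source_card {n d i : ℕ} (hdn : d ≤ n) (hi : i ≤ d) : (sourceSubset n d i).card = d := by
  unfold sourceSubset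
  rw [Finset.card_union_of_disjoint, Nat.card_Icc, Nat.card_Icc]
  · omega
  · rw [Finset.disjoint_left]
    intro a; simp only [Finset.mem_Icc]; omega

lemma conn_stage2 {n d p i : ℕ} {τ : Finset ℕ → Bool} (hdn : d ≤ n) (hi : i ≤ d)
    (hg : Good n d p i {A | τ A = true}) (m : ℕ) : ∀ B, τ B = true → Finset.Icc 1 i ⊆ B →
    d * n - ∑ z ∈ B, z = m →
    τ (sourceSubset n d i) = true ∧ plusConn n d τ (sourceSubset n d i) B := by
  obtain ⟨hs, hp, hD, hU⟩ := hg
  induction m using Nat.strong_induction_on with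
  | _ m ih =>
    intro B hB hiB hm
    obtain ⟨hBs, hBc⟩ := hs B hB
    by_cases hall : Finset.Icc (n - d + i + 1) n ⊆ B
    · have : sourceSubset n d i = B := by
        apply Finset.eq_of_subset_of_card_le
        · exact Finset.union_subset hiB hall
        · rw [source_card hdn hi, hBc]
      rw [this]
      exact ⟨hB, Relation.ReflTransGen.refl⟩
    · set M := Finset.Icc (n - d + i + 1) n \ B with hM
      have hMne : M.Nonempty := by rwa [hM, Finset.sdiff_nonempty]
      set y := M.max' hMne with hy
      have hyM := M.max'_mem hMne
      rw [← hy, hM, Finset.mem_sdiff, Finset.mem_Icc] at hyM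
      obtain ⟨⟨hy1, hy2⟩, hyB⟩ := hyM
      have hNne : (B.filter (· < y)).Nonempty := by
        by_contra hcon
        rw [Finset.not_nonempty_iff_eq_empty, Finset.filter_eq_empty_iff] at hcon
        have : B ⊆ Finset.Icc (y + 1) n := by
          intro z hz
          have h1 := hcon hz
          have h2 := Finset.mem_Icc.1 (hBs hz)
          have h3 : z ≠ y := by rintro rfl; exact hyB hz
          rw [Finset.mem_Icc]; omega
        have := Finset.card_le_card this
        rw [Nat.card_Icc] at this
        omega
      set x := (B.filter (· < y)).max' hNne with hx
      have hxm := (B.filter (· < y)).max'_mem hNne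
      rw [← hx, Finset.mem_filter] at hxm
      have hmax : ∀ z ∈ B, z < y → z ≤ x := fun z hz hzy =>
        Finset.le_max' _ _ (Finset.mem_filter.2 ⟨hz, hzy⟩)
      have hrk : i ≤ rk B x := by
        have h1 := Finset.card_filter_add_card_filter_not (s := B) (fun z => z < x)
        have h2 : B.filter (fun z => ¬ z < x) ⊆ insert x (Finset.Icc (y + 1) n) := by
          intro z hz
          rw [Finset.mem_filter] at hz
          rw [Finset.mem_insert, Finset.mem_Icc]
          have h3 := Finset.mem_Icc.1 (hBs hz.1)
          have h4 : z ≠ y := by rintro h; exact hyB (h ▸ hz.1)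
          have h5 := hmax z hz.1
          omega
        have h3 := Finset.card_le_card h2
        have h4 := Finset.card_insert_le x (Finset.Icc (y + 1) n)
        rw [Nat.card_Icc] at h4
        unfold rk
        omega
      have hxi : i < x := by
        by_contra hcon
        have h2 : B.filter (fun z => z < x) ⊆ Finset.Icc 1 (x - 1) := by
          intro z hz
          rw [Finset.mem_filter] at hz
          rw [Finset.mem_Icc]
          have h3 := Finset.mem_Icc.1 (hBs hz.1)
          omega
        have h3 := Finset.card_le_card h2
        rw [Nat.card_Icc] at h3
        have h4 := Finset.mem_Icc.1 (hBs hxm.1)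
        unfold rk at hrk
        omega
      have hnew : τ (insert y (B.erase x)) = true := hU B hB x hxm.1 hrk y hy2 hxm.2 hyB
      have hsum := sum_move B x y hxm.1 hyB
      have hle : ∑ z ∈ insert y (B.erase x), z ≤ d * n := by
        obtain ⟨h1, h2⟩ := hs _ hnew
        have := Finset.sum_le_card_nsmul (insert y (B.erase x)) (fun z => z) n
          (fun z hz => (Finset.mem_Icc.1 (h1 hz)).2)
        rw [h2] at this
        simpa using this
      have hxy := hxm.2
      obtain ⟨hS, hconn⟩ := ih _ (by omega) (insert y (B.erase x)) hnew (by
        intro z hz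
        have := Finset.mem_Icc.1 hz
        rw [Finset.mem_insert, Finset.mem_erase]
        exact Or.inr ⟨by omega, hiB hz⟩) rfl
      refine ⟨hS, hconn.tail ⟨hnew, hB, gadj_move hBs hBc hxm.1 hyB ?_ ?_⟩⟩
      · rw [Finset.mem_Icc]; omega
      · intro z hz hzx
        have h5 := hmax z hz
        omega

lemma conn_stage1 {n d p i : ℕ} {τ : Finset ℕ → Bool} (hdn : d ≤ n) (hi : i ≤ d)
    (hg : Good n d p i {A | τ A = true}) (m : ℕ) : ∀ B, τ B = true →
    ∑ z ∈ B, z = m →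
    τ (sourceSubset n d i) = true ∧ plusConn n d τ (sourceSubset n d i) B := by
  have hg' := hg
  obtain ⟨hs, hp, hD, hU⟩ := hg
  induction m using Nat.strong_induction_on with
  | _ m ih =>
    intro B hB hm
    obtain ⟨hBs, hBc⟩ := hs B hB
    by_cases hall : Finset.Icc 1 i ⊆ B
    · exact conn_stage2 hdn hi hg' _ B hB hall rfl
    · set M := Finset.Icc 1 i \ B with hM
      have hMne : M.Nonempty := by rwa [hM, Finset.sdiff_nonempty]
      set y := M.min' hMne with hy
      have hyM := M.min'_mem hMne
      rw [← hy, hM, Finset.mem_sdiff, Finset.mem_Icc] at hyM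
      obtain ⟨⟨hy1, hy2⟩, hyB⟩ := hyM
      have hNne : (B.filter (y < ·)).Nonempty := by
        by_contra hcon
        rw [Finset.not_nonempty_iff_eq_empty, Finset.filter_eq_empty_iff] at hcon
        have : B ⊆ Finset.Icc 1 (y - 1) := by
          intro z hz
          have h1 := hcon hz
          have h2 := Finset.mem_Icc.1 (hBs hz)
          have h3 : z ≠ y := by rintro rfl; exact hyB hz
          rw [Finset.mem_Icc]; omega
        have := Finset.card_le_card this
        rw [Nat.card_Icc] at this
        omega
      set x := (B.filter (y < ·)).min' hNne with hx
      have hxm := (B.filter (y < ·)).min'_mem hNne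
      rw [← hx, Finset.mem_filter] at hxm
      have hmin : ∀ z ∈ B, y < z → x ≤ z := fun z hz hzy =>
        Finset.min'_le _ _ (Finset.mem_filter.2 ⟨hz, hzy⟩)
      have hrk : rk B x < i := by
        have h2 : B.filter (fun z => z < x) ⊆ Finset.Icc 1 (y - 1) := by
          intro z hz
          rw [Finset.mem_filter] at hz
          rw [Finset.mem_Icc]
          have h3 := Finset.mem_Icc.1 (hBs hz.1)
          have h4 : z ≠ y := by rintro h; exact hyB (h ▸ hz.1)
          have h5 := hmin z hz.1
          omega
        have h3 := Finset.card_le_card h2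
        rw [Nat.card_Icc] at h3
        unfold rk
        omega
      have hxy := hxm.2
      have hnew : τ (insert y (B.erase x)) = true := hD B hB x hxm.1 hrk y hy1 hxm.2 hyB
      have hsum := sum_move B x y hxm.1 hyB
      obtain ⟨hS, hconn⟩ := ih _ (by omega) (insert y (B.erase x)) hnew rfl
      refine ⟨hS, hconn.tail ⟨hnew, hB, gadj_move hBs hBc hxm.1 hyB ?_ ?_⟩⟩
      · rw [Finset.mem_Icc]; omega
      · intro z hz hzx
        have h5 := hmin z hz
        omega

lemma coSigOnly_iff {n d p i : ℕ} {τ : Finset ℕ → Bool} (hp1 : 1 ≤ p) (hpn : p + d ≤ n)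
    (hi : i ≤ d) : τ ∈ coSigOnly n d p i ↔ Good n d p i {A | τ A = true} := by
  constructor
  · exact good_of_coSig hp1 hpn hi
  · intro hg
    refine ⟨cosig_of_good hp1 hpn hg, hg.2.1, ?_⟩
    intro B hB
    obtain ⟨h1, h2⟩ := conn_stage1 (by omega) hi hg _ B hB rfl
    exact ⟨h1, hB, h2⟩

/-- The family `P` splits `B` as `L ∪ R`. -/
def Split (i : ℕ) (B L R : Finset ℕ) : Prop :=
  B = L ∪ R ∧ L.card = i ∧ ∀ a ∈ L, ∀ b ∈ R, a < b

lemma gamma_split (n tn i : ℕ) (B L R : Finset ℕ) (h : Split i B L R) :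
    gammaSet n tn i B = L ∪ R.image (fun x => x + tn - n) := by
  obtain ⟨rfl, hc, hlt⟩ := h
  have hs : (L ∪ R).sort (· ≤ ·) = L.sort (· ≤ ·) ++ R.sort (· ≤ ·) := by
    have h1 : ((L ∪ R).sort (· ≤ ·)).Pairwise (· < ·) := (Finset.sortedLT_sort _).pairwise
    have h2 : (L.sort (· ≤ ·) ++ R.sort (· ≤ ·)).Pairwise (· < ·) := by
      rw [List.pairwise_append]
      refine ⟨(Finset.sortedLT_sort _).pairwise, (Finset.sortedLT_sort _).pairwise, ?_⟩
      intro a ha b hb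
      exact hlt a ((Finset.mem_sort _).1 ha) b ((Finset.mem_sort _).1 hb)
    have h3 : ((L ∪ R).sort (· ≤ ·)).Perm (L.sort (· ≤ ·) ++ R.sort (· ≤ ·)) := by
      rw [List.perm_ext_iff_of_nodup (h1.imp fun h => ne_of_lt h) (h2.imp fun h => ne_of_lt h)]
      intro a; simp
    exact h3.eq_of_pairwise (fun a b _ _ h h' => absurd h (lt_asymm h')) h1 h2
  unfold gammaSet
  rw [hs, List.mapIdx_append]
  ext z
  simp only [List.mem_toFinset, List.mem_append, List.mem_mapIdx, Finset.mem_union,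
    Finset.mem_image, Finset.length_sort, hc]
  refine or_congr ?_ ?_
  · constructor
    · rintro ⟨k, hk, rfl⟩
      rw [if_pos hk]
      exact (Finset.mem_sort (· ≤ ·)).1 (List.getElem_mem _)
    · intro hz
      obtain ⟨k, hk, rfl⟩ := List.getElem_of_mem ((Finset.mem_sort (· ≤ ·)).2 hz)
      rw [Finset.length_sort, hc] at hk
      refine ⟨k, hk, ?_⟩
      rw [if_pos hk]
  · constructor
    · rintro ⟨k, hk, rfl⟩
      rw [if_neg (by omega)]
      exact ⟨_, (Finset.mem_sort (· ≤ ·)).1 (List.getElem_mem _), rfl⟩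
    · rintro ⟨w, hw, rfl⟩
      obtain ⟨k, hk, rfl⟩ := List.getElem_of_mem ((Finset.mem_sort (· ≤ ·)).2 hw)
      rw [Finset.length_sort] at hk
      refine ⟨k, hk, ?_⟩
      rw [if_neg (by omega)]

lemma rk_range (B : Finset ℕ) : B.image (rk B) = Finset.range B.card := by
  apply Finset.Subset.antisymm
  · intro z hz
    obtain ⟨c, hc, rfl⟩ := Finset.mem_image.1 hz
    rw [Finset.mem_range]
    unfold rk
    apply Finset.card_lt_card
    rw [Finset.ssubset_iff_of_subset (Finset.filter_subset _ _)]
    exact ⟨c, hc, by simp⟩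
  · intro j hj
    obtain ⟨c, hc, h⟩ := exists_rk B j (Finset.mem_range.1 hj)
    exact Finset.mem_image.2 ⟨c, hc, h⟩

lemma exists_split (i : ℕ) (B : Finset ℕ) (hi : i ≤ B.card) : ∃ L R, Split i B L R := by
  refine ⟨B.filter (fun x => rk B x < i), B.filter (fun x => ¬ rk B x < i), ?_, ?_, ?_⟩
  · rw [Finset.filter_union_filter_not_eq]
  · have hinj : Set.InjOn (rk B) (B.filter (fun x => rk B x < i) : Finset ℕ) := by
      intro a ha b hb hab
      simp only [Finset.coe_filter, Set.mem_ofPred_eq] at ha hb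
      rcases lt_trichotomy a b with h | h | h
      · have := rk_lt B ha.1 h; omega
      · exact h
      · have := rk_lt B hb.1 h; omega
    rw [← Finset.card_image_of_injOn hinj]
    have : (B.filter (fun x => rk B x < i)).image (rk B) = Finset.range i := by
      ext j
      rw [Finset.mem_image, Finset.mem_range]
      constructor
      · rintro ⟨x, hx, rfl⟩; exact (Finset.mem_filter.1 hx).2
      · intro hj
        obtain ⟨c, hc, h⟩ := exists_rk B j (by omega)
        exact ⟨c, Finset.mem_filter.2 ⟨hc, by omega⟩, h⟩
    rw [this, Finset.card_range]
  · intro a ha b hb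
    rw [Finset.mem_filter] at ha hb
    by_contra hcon
    have := rk_mono B (show b ≤ a by omega)
    omega

lemma split_rk_L {i : ℕ} {B L R : Finset ℕ} (h : Split i B L R) {x : ℕ} (hx : x ∈ L) :
    rk B x < i := by
  obtain ⟨rfl, hc, hlt⟩ := h
  rw [← hc]
  unfold rk
  apply Finset.card_lt_card
  rw [Finset.ssubset_iff_of_subset]
  · exact ⟨x, hx, by simp⟩
  · intro z hz
    rw [Finset.mem_filter, Finset.mem_union] at hz
    rcases hz.1 with h | h
    · exact h
    · have := hlt x hx z h; omega

lemma split_rk_R {i : ℕ} {B L R : Finset ℕ} (h : Split i B L R) {x : ℕ} (hx : x ∈ R) :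
    i ≤ rk B x := by
  obtain ⟨rfl, hc, hlt⟩ := h
  rw [← hc]
  unfold rk
  apply Finset.card_le_card
  intro z hz
  rw [Finset.mem_filter, Finset.mem_union]
  exact ⟨Or.inl hz, hlt z hz x hx⟩

lemma mem_split {i : ℕ} {B L R : Finset ℕ} (h : Split i B L R) (z : ℕ) :
    z ∈ B ↔ z ∈ L ∨ z ∈ R := by rw [h.1, Finset.mem_union]

section gap
variable {n d p i : ℕ} {P : Set (Finset ℕ)} {B L R : Finset ℕ}

lemma gap_L (hp1 : 1 ≤ p) (hg : Good n d p i P) (hB : B ∈ P) (h : Split i B L R) {a : ℕ}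
    (ha : a ∈ L) : a + 1 ≤ p + d := by
  obtain ⟨hs, hp, hD, hU⟩ := hg
  have hfin : P.Finite := Set.finite_of_ncard_ne_zero (by omega)
  have haB : a ∈ B := (mem_split h a).2 (Or.inl ha)
  have := count_one P hfin (B.erase a) (Finset.Icc 1 a) ?_
  · have h2 := Finset.card_erase_add_one haB
    rw [(hs B hB).2] at h2
    rw [Nat.card_Icc] at this
    omega
  · intro z hz hzC
    rw [Finset.mem_Icc] at hz
    rcases hz.2.eq_or_lt with rfl | hlt
    · rw [Finset.insert_erase haB]; exact hB
    · refine hD B hB a haB (split_rk_L h ha) z hz.1 hlt ?_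
      intro hzB; exact hzC (Finset.mem_erase.2 ⟨by omega, hzB⟩)

lemma gap_R (hp1 : 1 ≤ p) (hg : Good n d p i P) (hB : B ∈ P) (h : Split i B L R) {b : ℕ}
    (hb : b ∈ R) : n + 2 ≤ p + d + b := by
  obtain ⟨hs, hp, hD, hU⟩ := hg
  have hfin : P.Finite := Set.finite_of_ncard_ne_zero (by omega)
  have hbB : b ∈ B := (mem_split h b).2 (Or.inr hb)
  have := count_one P hfin (B.erase b) (Finset.Icc b n) ?_
  · have h2 := Finset.card_erase_add_one hbB
    rw [(hs B hB).2] at h2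
    rw [Nat.card_Icc] at this
    have := Finset.mem_Icc.1 ((hs B hB).1 hbB)
    omega
  · intro z hz hzC
    rw [Finset.mem_Icc] at hz
    rcases hz.1.eq_or_lt with rfl | hlt
    · rw [Finset.insert_erase hbB]; exact hB
    · refine hU B hB b hbB (split_rk_R h hb) z hz.2 hlt ?_
      intro hzB; exact hzC (Finset.mem_erase.2 ⟨by omega, hzB⟩)

lemma gap_LR (hp1 : 1 ≤ p) (hg : Good n d p i P) (hB : B ∈ P) (h : Split i B L R) {a b : ℕ}
    (ha : a ∈ L) (hb : b ∈ R) : n + a + 2 ≤ p + d + b := by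
  obtain ⟨hs, hp, hD, hU⟩ := hg
  have hfin : P.Finite := Set.finite_of_ncard_ne_zero (by omega)
  have haB : a ∈ B := (mem_split h a).2 (Or.inl ha)
  have hbB : b ∈ B := (mem_split h b).2 (Or.inr hb)
  have hab := h.2.2 a ha b hb
  set C := (B.erase a).erase b with hC
  have e1 : insert b C = B.erase a := by
    rw [hC, Finset.insert_erase]; rw [Finset.mem_erase]; exact ⟨by omega, hbB⟩
  have e2 : insert a C = B.erase b := by
    rw [hC, Finset.erase_right_comm, Finset.insert_erase]; rw [Finset.mem_erase]
    exact ⟨by omega, haB⟩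
  have haC : a ∉ C := by simp [hC]
  have hbC : b ∉ C := by simp [hC]
  have hcard : C.card + 2 = d := by
    have h1 := Finset.card_erase_add_one haB
    rw [← e1, Finset.card_insert_of_notMem hbC, (hs B hB).2] at h1
    omega
  have := (count_ivl P hfin n C b a a b (by omega) hbC haC hab.le haC
    (Finset.mem_Icc.1 ((hs B hB).1 hbB)).2 (Or.inl hab) ?_ ?_).2 hab hab
  · omega
  · intro z hz1 hza hzC
    rw [e1] at hzC ⊢
    rcases hza.eq_or_lt with rfl | hlt
    · rw [Finset.insert_erase haB]; exact hB
    · refine hD B hB a haB (split_rk_L h ha) z hz1 hlt ?_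
      intro hzB; exact hzC (Finset.mem_erase.2 ⟨by omega, hzB⟩)
  · intro z hz hzn hzC
    rw [e2] at hzC ⊢
    rcases hz.eq_or_lt with rfl | hlt
    · rw [Finset.insert_erase hbB]; exact hB
    · refine hU B hB b hbB (split_rk_R h hb) z hzn hlt ?_
      intro hzB; exact hzC (Finset.mem_erase.2 ⟨by omega, hzB⟩)

lemma shift_split {tn : ℕ} (hp1 : 1 ≤ p) (hptn : p + d ≤ tn) (hg : Good n d p i P) (hB : B ∈ P)
    (h : Split i B L R) :
    Split i (gammaSet n tn i B) L (R.image (fun x => x + tn - n)) := by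
  refine ⟨gamma_split n tn i B L R h, h.2.1, ?_⟩
  intro a ha b' hb'
  obtain ⟨b, hb, rfl⟩ := Finset.mem_image.1 hb'
  have := gap_LR hp1 hg hB h ha hb
  omega

lemma gamma_inv {tn : ℕ} (hp1 : 1 ≤ p) (hptn : p + d ≤ tn) (hi : i ≤ d)
    (hg : Good n d p i P) (hB : B ∈ P) : gammaSet tn n i (gammaSet n tn i B) = B := by
  obtain ⟨L, R, h⟩ := exists_split i B (by rw [(hg.1 B hB).2]; exact hi)
  rw [gamma_split _ _ _ _ _ _ (shift_split hp1 hptn hg hB h), Finset.image_image]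
  have : R.image ((fun x => x + n - tn) ∘ fun x => x + tn - n) = R.image id := by
    apply Finset.image_congr
    intro b hb
    have := gap_R hp1 hg hB h hb
    simp only [Function.comp, id]
    omega
  rw [this, Finset.image_id, ← h.1]

lemma good_image {tn : ℕ} (hp1 : 1 ≤ p) (hptn : p + d ≤ tn) (hi : i ≤ d)
    (hg : Good n d p i P) : Good tn d p i (gammaSet n tn i '' P) := by
  have hg' := hg
  obtain ⟨hs, hp, hD, hU⟩ := hg
  have hsplit : ∀ B ∈ P, ∃ L R, Split i B L R := fun B hB =>
    exists_split i B (by rw [(hs B hB).2]; exact hi)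
  refine ⟨?_, ?_, ?_, ?_⟩
  · rintro _ ⟨B, hB, rfl⟩
    obtain ⟨L, R, h⟩ := hsplit B hB
    have h' := shift_split hp1 hptn hg' hB h
    constructor
    · intro z hz
      rw [Finset.mem_Icc]
      rcases (mem_split h' z).1 hz with hz | hz
      · have h1 := gap_L hp1 hg' hB h hz
        have h2 := Finset.mem_Icc.1 ((hs B hB).1 ((mem_split h z).2 (Or.inl hz)))
        omega
      · obtain ⟨b, hb, rfl⟩ := Finset.mem_image.1 hz
        have h1 := gap_R hp1 hg' hB h hb
        have h2 := Finset.mem_Icc.1 ((hs B hB).1 ((mem_split h b).2 (Or.inr hb)))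
        omega
    · have hc := (hs B hB).2
      rw [h'.1, Finset.card_union_of_disjoint, Finset.card_image_of_injOn]
      · rw [h.1, Finset.card_union_of_disjoint] at hc
        · exact hc
        · rw [Finset.disjoint_left]
          intro a ha hb; have := h.2.2 a ha a hb; omega
      · intro a ha b hb hab
        have h1 := gap_R hp1 hg' hB h ha
        have h2 := gap_R hp1 hg' hB h hb
        simp only at hab
        omega
      · rw [Finset.disjoint_left]
        intro a ha hb; have := h'.2.2 a ha a hb; omega
  · rw [Set.ncard_image_of_injOn, hp]
    intro A hA B hB hAB
    rw [← gamma_inv hp1 hptn hi hg' hA, hAB, gamma_inv hp1 hptn hi hg' hB]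
  · rintro _ ⟨B, hB, rfl⟩ x hx hr y hy1 hyx hyA
    obtain ⟨L, R, h⟩ := hsplit B hB
    have h' := shift_split hp1 hptn hg' hB h
    have hxL : x ∈ L := by
      rcases (mem_split h' x).1 hx with hz | hz
      · exact hz
      · have := split_rk_R h' hz; omega
    rw [mem_split h', not_or] at hyA
    have hxR : x ∉ R := fun hb => by have := h.2.2 x hxL x hb; omega
    have hxR' : x ∉ R.image (fun x => x + tn - n) := fun hb => by
      have := h'.2.2 x hxL x hb; omega
    have hyR : y ∉ R := fun hb => by have := h.2.2 x hxL y hb; omega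
    refine ⟨insert y (B.erase x), hD B hB x ((mem_split h x).2 (Or.inl hxL)) (split_rk_L h hxL) y hy1
      hyx (by rw [mem_split h, not_or]; exact ⟨hyA.1, hyR⟩), ?_⟩
    have hsp : Split i (insert y (B.erase x)) (insert y (L.erase x)) R := by
      refine ⟨?_, ?_, ?_⟩
      · rw [h.1, Finset.erase_union_distrib, Finset.erase_eq_of_notMem hxR, Finset.insert_union]
      · rw [Finset.card_insert_of_notMem (by simp [hyA.1]), Finset.card_erase_add_one hxL, h.2.1]
      · intro a ha b hb
        rcases Finset.mem_insert.1 ha with rfl | ha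
        · have := h.2.2 x hxL b hb; omega
        · exact h.2.2 a (Finset.mem_of_mem_erase ha) b hb
    rw [gamma_split _ _ _ _ _ _ hsp, h'.1, Finset.erase_union_distrib,
      Finset.erase_eq_of_notMem hxR', Finset.insert_union]
  · rintro _ ⟨B, hB, rfl⟩ x hx hr y hyn hxy hyA
    obtain ⟨L, R, h⟩ := hsplit B hB
    have h' := shift_split hp1 hptn hg' hB h
    have hxR' : x ∈ R.image (fun x => x + tn - n) := by
      rcases (mem_split h' x).1 hx with hz | hz
      · have := split_rk_L h' hz; omega
      · exact hz
    rw [mem_split h', not_or] at hyA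
    have hxL : x ∉ L := fun hb => by have := h'.2.2 x hb x hxR'; omega
    obtain ⟨x0, hx0, hx0e⟩ := Finset.mem_image.1 hxR'
    have hg0 := gap_R hp1 hg' hB h hx0
    obtain ⟨y0, hy0⟩ : ∃ y0, y0 + tn = y + n := ⟨y + n - tn, by omega⟩
    have hx0L : x0 ∉ L := fun hb => by have := h.2.2 x0 hb x0 hx0; omega
    have hy0L : y0 ∉ L := fun hb => by have := h.2.2 y0 hb x0 hx0; omega
    have hy0R : y0 ∉ R := fun hb => hyA.2 (Finset.mem_image.2 ⟨y0, hb, by omega⟩)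
    refine ⟨insert y0 (B.erase x0), hU B hB x0 ((mem_split h x0).2 (Or.inr hx0)) (split_rk_R h hx0) y0
      (by omega) (by omega) (by rw [mem_split h, not_or]; exact ⟨hy0L, hy0R⟩), ?_⟩
    have hsp : Split i (insert y0 (B.erase x0)) L (insert y0 (R.erase x0)) := by
      refine ⟨?_, h.2.1, ?_⟩
      · rw [h.1, Finset.erase_union_distrib, Finset.erase_eq_of_notMem hx0L, Finset.union_insert]
      · intro a ha b hb
        rcases Finset.mem_insert.1 hb with rfl | hb
        · have := h.2.2 a ha x0 hx0; omega
        · exact h.2.2 a ha b (Finset.mem_of_mem_erase hb)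
    have him : (R.erase x0).image (fun x => x + tn - n) =
        (R.image (fun x => x + tn - n)).erase x := by
      ext z
      simp only [Finset.mem_image, Finset.mem_erase]
      constructor
      · rintro ⟨w, ⟨hw, hwR⟩, rfl⟩
        have := gap_R hp1 hg' hB h hwR
        exact ⟨by omega, w, hwR, rfl⟩
      · rintro ⟨hz, w, hwR, rfl⟩
        exact ⟨w, ⟨by rintro rfl; exact hz hx0e, hwR⟩, rfl⟩
    rw [gamma_split _ _ _ _ _ _ hsp, h'.1, Finset.erase_union_distrib,
      Finset.erase_eq_of_notMem hxL, Finset.image_insert, him, ← Finset.union_insert]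
    congr 2
    omega

end gap

lemma hFun_set (n tn i : ℕ) (τ : Finset ℕ → Bool) :
    {A | hFun n tn i τ A = true} = gammaSet n tn i '' {A | τ A = true} := by
  ext A
  simp only [hFun, ofPlusSet, Set.mem_ofPred_eq, Set.mem_image]
  constructor
  · intro h
    split_ifs at h with h1
    obtain ⟨B, hB, rfl⟩ := h1
    exact ⟨B, hB, rfl⟩
  · rintro ⟨B, hB, rfl⟩
    rw [if_pos ⟨B, hB, rfl⟩]

lemma hFun_mapsTo {n tn d p i : ℕ} (hp1 : 1 ≤ p) (hpn : p + d ≤ n) (hptn : p + d ≤ tn)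
    (hi : i ≤ d) : Set.MapsTo (hFun n tn i) (coSigOnly n d p i) (coSigOnly tn d p i) := by
  intro τ hτ
  rw [coSigOnly_iff hp1 hptn hi, hFun_set]
  exact good_image hp1 hptn hi ((coSigOnly_iff hp1 hpn hi).1 hτ)

lemma hFun_leftInv {n tn d p i : ℕ} (hp1 : 1 ≤ p) (hpn : p + d ≤ n) (hptn : p + d ≤ tn)
    (hi : i ≤ d) : Set.LeftInvOn (hFun tn n i) (hFun n tn i) (coSigOnly n d p i) := by
  intro τ hτ
  have hg := (coSigOnly_iff hp1 hpn hi).1 hτ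
  have : {A | hFun tn n i (hFun n tn i τ) A = true} = {A | τ A = true} := by
    rw [hFun_set, hFun_set, Set.image_image]
    have e := Set.image_congr (s := {A | τ A = true}) (g := id)
      (f := fun B => gammaSet tn n i (gammaSet n tn i B))
      (fun B hB => gamma_inv hp1 hptn hi hg hB)
    rw [e, Set.image_id]
  funext A
  have := Set.ext_iff.1 this A
  simp only [Set.mem_ofPred_eq] at this
  exact Bool.eq_iff_iff.2 this

/-- **Corollary.** The map `h_{n,ñ,d,p,i}` (keep the first `i` coordinates, shift the
rest by `ñ - n`) is a bijection between `𝒮̄_{p,i}(n,d)` and `𝒮̄_{p,i}(ñ,d)`; moreover it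
preserves single steps from `𝒮̄_{p,i}(n,d)` to `𝒮̄_{p+1,i}(n,d)`. -/
theorem statement9 (n tn d p i : ℕ) (hdn : d < n) (hdtn : d < tn)
    (hp1 : 1 ≤ p) (hpn : p + d ≤ n) (hptn : p + d ≤ tn) (hi : i ≤ d) :
    Set.BijOn (hFun n tn i) (coSigOnly n d p i) (coSigOnly tn d p i) ∧
    (p + 1 + d ≤ n → p + 1 + d ≤ tn →
      ∀ τ ∈ coSigOnly n d p i, ∀ ρ ∈ coSigOnly n d (p + 1) i,
        SingleStep τ ρ → SingleStep (hFun n tn i τ) (hFun n tn i ρ)) := by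
  refine ⟨?_, ?_⟩
  · exact Set.InvOn.bijOn ⟨hFun_leftInv hp1 hpn hptn hi, hFun_leftInv hp1 hptn hpn hi⟩
      (hFun_mapsTo hp1 hpn hptn hi) (hFun_mapsTo hp1 hptn hpn hi)
  · intro hpn' hptn' τ hτ ρ hρ hst
    have c1 : plusCount (hFun n tn i τ) = p := (hFun_mapsTo hp1 hpn hptn hi hτ).2.1
    have c2 : plusCount (hFun n tn i ρ) = p + 1 :=
      (hFun_mapsTo (by omega) hpn' hptn' hi hρ).2.1
    refine ⟨?_, by omega⟩
    have hsub : {A | hFun n tn i τ A = true} ⊆ {A | hFun n tn i ρ A = true} := by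
      rw [hFun_set, hFun_set]
      exact Set.image_mono hst.1.subset
    refine HasSubset.Subset.ssubset_of_ne hsub ?_
    intro heq
    unfold plusCount at c1 c2
    rw [heq] at c1
    omega
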